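/- If k = q, then the puncture code P(C) of the [q^2+1, q, q^2+2-q]_{q^2} Reed-Solomon code C is the one-dimensional F_q-subspace spanned by the all-one vector; in particular its minimum Hamming distance is q^2+1. -/

import Mathlib

open Polynomial

/-- The codeword of the (extended) `k`-dimensional Reed-Solomon code of length `q² + 1`
associated to a polynomial `f`: the evaluations of `f` at all elements of the field
(enumerated by `a`), followed by the coefficient of `X^(k-1)` in `f`. -/
def rsWord (q k : ℕ) {F : Type} [Field F] (a : Fin (q ^ 2) → F)
    (f : Polynomial F) (i : Fin (q ^ 2 + 1)) : F :=
  if hi : (i : ℕ) < q ^ 2 then f.eval (a ⟨(i : ℕ), hi⟩) else f.coeff (k - 1)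

/-- The puncture code `P(C)` of the `k`-dimensional Reed-Solomon code `C` of length `q² + 1`
over `F = 𝔽_{q²}`: all vectors `λ` with entries in the subfield `𝔽_q` (i.e. `λ_i^q = λ_i`)
such that `∑ λ_i u_i v_i^q = 0` for all codewords `u, v` of `C`. -/
def puncRS (q k : ℕ) {F : Type} [Field F] [Fintype F] (a : Fin (q ^ 2) → F) :
    Set (Fin (q ^ 2 + 1) → F) :=
  {lam | (∀ i, lam i ^ q = lam i) ∧
    ∀ f g : Polynomial F, f.degree < (k : WithBot ℕ) → g.degree < (k : WithBot ℕ) →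
      ∑ i, lam i * rsWord q k a f i * (rsWord q k a g i) ^ q = 0}

/-- The Hamming weight of a vector: the number of its nonzero coordinates. -/
noncomputable def wt {n : ℕ} {F : Type} [Zero F] (v : Fin n → F) : ℕ :=
  Set.ncard {i | v i ≠ 0}

/-!
For polynomials `f`, `g` of degree less than `q`, the entries `f(a_i) g(a_i)^q`, followed by
`f_{q-1} (g_{q-1})^q`, form the codeword of `f g^q` in the Reed-Solomon code of dimension `q²`.
The entries of every codeword of that larger code add up to zero, because
`∑ x, h(x) = -h_{q²-1}` over a field with `q²` elements whenever `deg h < q²`. Hence the constant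
vectors with entries in `𝔽_q` lie in the puncture code.

Conversely, `f = g = 1` gives the all-one vector minus the unit vector at the last coordinate, and
`f = g = (X - a_j)^(q-1)` gives the all-one vector minus the unit vector at coordinate `j`, since
`f^(q+1) = (X - a_j)^(q²-1)` is monic, vanishes at `a_j` and equals `1` elsewhere. Orthogonality
to all of these vectors says `λ_i = ∑ j, λ_j` for every `i`, so `λ` is constant.
-/

section SumOverFiniteField

variable {K : Type*} [Field K] [Fintype K]

lemma sum_pow_card_sub_one : ∑ x : K, x ^ (Fintype.card K - 1) = -1 := by
  classical
  have hcard : Fintype.card K - 1 ≠ 0 := Nat.sub_ne_zero_of_lt Fintype.one_lt_card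
  have hpow (x : K) : x ^ (Fintype.card K - 1) = 1 - if x = 0 then 1 else 0 := by
    split_ifs with hx
    · simp [hx, hcard]
    · simp [FiniteField.pow_card_sub_one_eq_one x hx]
  simp [hpow]

lemma sum_eval_eq_neg_coeff_card_sub_one {f : K[X]} (hf : f.natDegree < Fintype.card K) :
    ∑ x : K, f.eval x = -f.coeff (Fintype.card K - 1) := by
  have hcard : Fintype.card K - 1 + 1 = Fintype.card K := Nat.sub_add_cancel Fintype.card_pos
  calc ∑ x : K, f.eval x
      = ∑ x : K, ∑ i ∈ Finset.range (Fintype.card K), f.coeff i * x ^ i := by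
        simp_rw [eval_eq_sum_range' hf]
    _ = ∑ i ∈ Finset.range (Fintype.card K), f.coeff i * ∑ x : K, x ^ i := by
        simp_rw [Finset.sum_comm (γ := K), Finset.mul_sum]
    _ = -f.coeff (Fintype.card K - 1) := by
        rw [← hcard, Finset.sum_range_succ, hcard, sum_pow_card_sub_one, Finset.sum_eq_zero,
          zero_add, mul_neg_one]
        intro i hi
        rw [FiniteField.sum_pow_lt_card_sub_one K i (Finset.mem_range.1 hi), mul_zero]

end SumOverFiniteField

section NatDegree

variable {R : Type*} [Semiring R] {f g : R[X]} {n : ℕ}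

lemma natDegree_lt_iff_degree_lt_of_ne_zero (hn : n ≠ 0) : f.natDegree < n ↔ f.degree < n := by
  obtain rfl | hf := eq_or_ne f 0
  · simp [Nat.pos_of_ne_zero hn]
  · exact natDegree_lt_iff_degree_lt hf

lemma natDegree_mul_pow_self_lt_sq (hf : f.natDegree < n) (hg : g.natDegree < n) :
    (f * g ^ n).natDegree < n ^ 2 := by
  have hgn : (g ^ n).natDegree ≤ n * g.natDegree := natDegree_pow_le
  calc (f * g ^ n).natDegree
      ≤ f.natDegree + n * g.natDegree := natDegree_mul_le_of_le le_rfl hgn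
    _ < n * (g.natDegree + 1) := by linarith
    _ ≤ n ^ 2 := by rw [sq]; gcongr; exact hg

end NatDegree

lemma one_lt_of_card_eq_sq {α : Type*} [Fintype α] [Nontrivial α] {n : ℕ}
    (hα : Fintype.card α = n ^ 2) : 1 < n :=
  (Nat.one_lt_pow_iff two_ne_zero).1 (hα ▸ Fintype.one_lt_card)

section RSWord

variable {F : Type} [Field F] {q k d e : ℕ} {a : Fin (q ^ 2) → F} {f g : F[X]}

@[simp]
lemma rsWord_castSucc (i : Fin (q ^ 2)) : rsWord q k a f i.castSucc = f.eval (a i) := by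
  simp [rsWord]

@[simp]
lemma rsWord_last : rsWord q k a f (Fin.last (q ^ 2)) = f.coeff (k - 1) := by
  simp [rsWord]

lemma rsWord_mul_rsWord (hf : f.natDegree ≤ d) (hg : g.natDegree ≤ e) (i : Fin (q ^ 2 + 1)) :
    rsWord q (d + 1) a f i * rsWord q (e + 1) a g i = rsWord q (d + e + 1) a (f * g) i := by
  cases i using Fin.lastCases with
  | last => simp [coeff_mul_add_eq_of_natDegree_le hf hg]
  | cast i => simp

lemma rsWord_pow (hf : f.natDegree ≤ d) (n : ℕ) (i : Fin (q ^ 2 + 1)) :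
    rsWord q (d + 1) a f i ^ n = rsWord q (n * d + 1) a (f ^ n) i := by
  cases i using Fin.lastCases with
  | last => simp [coeff_pow_of_natDegree_le hf]
  | cast i => simp

lemma rsWord_mul_rsWord_pow_self (hf : f.natDegree < q) (hg : g.natDegree < q)
    (i : Fin (q ^ 2 + 1)) :
    rsWord q q a f i * rsWord q q a g i ^ q = rsWord q (q ^ 2) a (f * g ^ q) i := by
  obtain ⟨d, rfl⟩ := Nat.exists_eq_add_one.2 hf.pos
  have hf' : f.natDegree ≤ d := Nat.le_of_lt_succ hf
  have hg' : g.natDegree ≤ d := Nat.le_of_lt_succ hg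
  rw [rsWord_pow hg', rsWord_mul_rsWord hf' (natDegree_pow_le_of_le _ hg')]
  congr 1
  ring

lemma rsWord_one (hk : 1 < k) : rsWord q k a 1 = 1 - Pi.single (Fin.last (q ^ 2)) 1 := by
  ext i
  cases i using Fin.lastCases with
  | last => simp [coeff_one, Nat.sub_ne_zero_of_lt hk]
  | cast i => simp

variable [Fintype F]

lemma rsWord_X_sub_C_pow (hF : Fintype.card F = q ^ 2) (ha : Function.Injective a)
    (j : Fin (q ^ 2)) :
    rsWord q (q ^ 2) a ((X - C (a j)) ^ (q ^ 2 - 1)) = 1 - Pi.single j.castSucc 1 := by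
  have hq : q ^ 2 - 1 ≠ 0 := Nat.sub_ne_zero_of_lt (hF ▸ Fintype.one_lt_card)
  ext i
  cases i using Fin.lastCases with
  | last =>
    have hcoeff : ((X - C (a j)) ^ (q ^ 2 - 1)).coeff (q ^ 2 - 1) = 1 := by
      simpa using coeff_pow_of_natDegree_le (natDegree_X_sub_C_le (a j)) (m := q ^ 2 - 1)
    simp [hcoeff]
  | cast i =>
    obtain rfl | hij := eq_or_ne i j
    · simp [hq]
    · simpa [hij, hF] using
        FiniteField.pow_card_sub_one_eq_one _ (sub_ne_zero.2 (ha.ne hij))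

lemma sum_rsWord (hF : Fintype.card F = q ^ 2) (ha : Function.Bijective a)
    (hf : f.natDegree < q ^ 2) : ∑ i, rsWord q (q ^ 2) a f i = 0 := by
  rw [← hF] at hf
  simp [Fin.sum_univ_castSucc, ha.sum_comp (f.eval ·), sum_eval_eq_neg_coeff_card_sub_one hf, hF]

end RSWord

section PunctureCode

variable {F : Type} [Field F] [Fintype F] {q : ℕ} {a : Fin (q ^ 2) → F}

lemma sum_rsWord_mul_rsWord_pow_self (hF : Fintype.card F = q ^ 2) (ha : Function.Bijective a)
    {f g : F[X]} (hf : f.natDegree < q) (hg : g.natDegree < q) :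
    ∑ i, rsWord q q a f i * rsWord q q a g i ^ q = 0 := by
  simp_rw [rsWord_mul_rsWord_pow_self hf hg]
  exact sum_rsWord hF ha (natDegree_mul_pow_self_lt_sq hf hg)

lemma exists_rsWord_mul_rsWord_pow_self_eq_one_sub_single (hF : Fintype.card F = q ^ 2)
    (ha : Function.Injective a) (i : Fin (q ^ 2 + 1)) :
    ∃ f : F[X], f.natDegree < q ∧
      ∀ j, rsWord q q a f j * rsWord q q a f j ^ q =
        (1 - Pi.single i 1 : Fin (q ^ 2 + 1) → F) j := by
  have hq : 1 < q := one_lt_of_card_eq_sq hF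
  suffices ∃ f : F[X], f.natDegree < q ∧ rsWord q (q ^ 2) a (f * f ^ q) = 1 - Pi.single i 1 by
    obtain ⟨f, hf, hword⟩ := this
    exact ⟨f, hf, fun j ↦ by rw [rsWord_mul_rsWord_pow_self hf hf, hword]⟩
  cases i using Fin.lastCases with
  | last =>
    refine ⟨1, by simpa using hq.pos, ?_⟩
    rw [one_pow, mul_one, rsWord_one (Nat.one_lt_pow two_ne_zero hq)]
  | cast i =>
    have hexp : (q - 1) * (q + 1) = q ^ 2 - 1 := by
      rw [mul_comm, ← Nat.sq_sub_sq, one_pow]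
    refine ⟨(X - C (a i)) ^ (q - 1), ?_, ?_⟩
    · rw [natDegree_pow, natDegree_X_sub_C, mul_one]
      exact Nat.sub_one_lt_of_lt hq
    · rw [← pow_succ', ← pow_mul, hexp, rsWord_X_sub_C_pow hF ha]

lemma forall_sum_rsWord_eq_zero_iff_exists_eq_const (hF : Fintype.card F = q ^ 2)
    (ha : Function.Bijective a) {lam : Fin (q ^ 2 + 1) → F} :
    (∀ f g : F[X], f.natDegree < q → g.natDegree < q →
      ∑ i, lam i * rsWord q q a f i * rsWord q q a g i ^ q = 0) ↔ ∃ c, lam = fun _ ↦ c := by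
  simp_rw [mul_assoc]
  constructor
  · intro horth
    refine ⟨∑ j, lam j, funext fun i ↦ ?_⟩
    obtain ⟨f, hf, hword⟩ := exists_rsWord_mul_rsWord_pow_self_eq_one_sub_single hF ha.injective i
    have hsum : ∑ j, lam j - lam i = 0 := by
      simpa [hword, mul_sub, Pi.single_apply] using horth f f hf hf
    exact (sub_eq_zero.1 hsum).symm
  · rintro ⟨c, rfl⟩ f g hf hg
    rw [← Finset.mul_sum, sum_rsWord_mul_rsWord_pow_self hF ha hf hg, mul_zero]

lemma puncRS_self_eq (hF : Fintype.card F = q ^ 2) (ha : Function.Bijective a) :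
    puncRS q q a = {lam | ∃ c : F, c ^ q = c ∧ lam = fun _ ↦ c} := by
  ext lam
  simp only [puncRS, Set.mem_ofPred_eq,
    ← natDegree_lt_iff_degree_lt_of_ne_zero (one_lt_of_card_eq_sq hF).ne_bot]
  rw [forall_sum_rsWord_eq_zero_iff_exists_eq_const hF ha]
  constructor
  · rintro ⟨hfixed, c, rfl⟩
    exact ⟨c, hfixed 0, rfl⟩
  · rintro ⟨c, hc, rfl⟩
    exact ⟨fun _ ↦ hc, c, rfl⟩

end PunctureCode

lemma wt_const {n : ℕ} {F : Type} [Zero F] {c : F} (hc : c ≠ 0) :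
    wt (fun _ : Fin n ↦ c) = n := by
  simp [wt, hc, Set.ncard_univ]

/-- If `k = q`, then the puncture code `P(C)` of the
`[q²+1, q, q²+2-q]_{q²}` Reed-Solomon code `C` is the one-dimensional `𝔽_q`-subspace spanned
by the all-one vector, i.e. it consists exactly of the constant vectors with entries in
`𝔽_q`; in particular its minimum Hamming distance is `q² + 1`. -/
theorem puncture_RS_k_eq_q
    (q : ℕ) (hq : IsPrimePow q)
    (F : Type) [Field F] [Fintype F] (hF : Fintype.card F = q ^ 2)
    (a : Fin (q ^ 2) → F) (ha : Function.Bijective a) :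
    puncRS q q a = {lam : Fin (q ^ 2 + 1) → F | ∃ c : F, c ^ q = c ∧ lam = fun _ => c} ∧
    (∃ lam ∈ puncRS q q a, lam ≠ 0 ∧ wt lam = q ^ 2 + 1) ∧
    (∀ lam ∈ puncRS q q a, lam ≠ 0 → q ^ 2 + 1 ≤ wt lam) := by
  have hpunc := puncRS_self_eq hF ha
  refine ⟨hpunc, ⟨fun _ ↦ 1, ?_, ?_, wt_const one_ne_zero⟩, ?_⟩
  · rw [hpunc]
    exact ⟨1, one_pow q, rfl⟩
  · exact Function.ne_iff.2 ⟨0, one_ne_zero⟩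
  · intro lam hlam hne
    rw [hpunc] at hlam
    obtain ⟨c, -, rfl⟩ := hlam
    have hc : c ≠ 0 := by
      rintro rfl
      exact hne rfl
    exact (wt_const hc).ge
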